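/- If α ∈ K satisfies dα = 0, then α − P^∞α ∈ im d, so α and P^∞α lie in the same cohomology class. Consequently the map P^∞ : K → 𝒫 induces a linear isomorphism ker d / im d ≅ ker(d|_𝒫) / im(d|_𝒫), i.e. P^∞ is an isomorphism at the cohomology level. -/

import Mathlib

/-- `A ⊕ B ⊕ C = K` as an internal direct sum: every element of `K` is uniquely
the sum of an element of `A`, an element of `B` and an element of `C`. -/
def IsInternalTriple {𝕜 K : Type*} [Field 𝕜] [AddCommGroup K] [Module 𝕜 K]
    (A B C : Submodule 𝕜 K) : Prop :=
  ∀ x : K, ∃! p : A × B × C, (p.1 : K) + (p.2.1 : K) + (p.2.2 : K) = x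

/-!
The operator `P = 1 - h d - d h` is chain homotopic to the identity through `h`, and it commutes
with both `d` and `h` because `d² = h² = 0`. Multiplying `1 - P = d h + h d` by the geometric sum
`∑ i < n, P ^ i` shows that `P ^ n` is homotopic to the identity through an operator `H` which
commutes with `P ^ n`. Thus `H` preserves `im P ^ n`, so the same homotopy makes `P ^ n` and the
inclusion `im P ^ n ⊆ K` mutually inverse on cohomology. For the partial inverse `h = d₀⁻¹`, the
identity `h² = 0` holds because `h` takes its values in `T ⊆ C` and vanishes on `C`.
-/

/-- `h` is a chain homotopy from `p` to the identity for the differential `d`. The notion is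
ungraded, so it makes sense in any ring, here the ring of endomorphisms of a module. -/
def IsHomotopyToOne {A : Type*} [Ring A] (d h p : A) : Prop :=
  1 - p = d * h + h * d

namespace IsHomotopyToOne

section Ring

variable {A : Type*} [Ring A] {d h p : A}

theorem one_sub_mul_sub_mul (d h : A) : IsHomotopyToOne d h (1 - h * d - d * h) := by
  unfold IsHomotopyToOne
  abel

theorem swap (hp : IsHomotopyToOne d h p) : IsHomotopyToOne h d p :=
  Eq.trans hp (add_comm _ _)

theorem commute_differential (hp : IsHomotopyToOne d h p) (hd : d * d = 0) : Commute p d := by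
  have hcomm : Commute (1 - p) d := by
    calc (1 - p) * d = (d * h + h * d) * d := by rw [hp]
      _ = d * h * d := by rw [add_mul, mul_assoc h d d, hd, mul_zero, add_zero]
      _ = d * (d * h + h * d) := by
        rw [mul_add, ← mul_assoc d d h, hd, zero_mul, zero_add, mul_assoc]
      _ = d * (1 - p) := by rw [hp]
  simpa only [sub_sub_cancel] using (Commute.one_left d).sub_left hcomm

theorem commute_homotopy (hp : IsHomotopyToOne d h p) (hh : h * h = 0) : Commute p h :=
  hp.swap.commute_differential hh

theorem pow (hp : IsHomotopyToOne d h p) (hpd : Commute p d) (n : ℕ) :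
    IsHomotopyToOne d ((∑ i ∈ Finset.range n, p ^ i) * h) (p ^ n) := by
  have hGd : Commute (∑ i ∈ Finset.range n, p ^ i) d :=
    Commute.sum_left _ _ _ fun i _ => hpd.pow_left i
  calc 1 - p ^ n = (∑ i ∈ Finset.range n, p ^ i) * (1 - p) := (geom_sum_mul_neg p n).symm
    _ = (∑ i ∈ Finset.range n, p ^ i) * d * h + (∑ i ∈ Finset.range n, p ^ i) * h * d := by
      rw [hp, mul_add, mul_assoc, mul_assoc]
    _ = d * ((∑ i ∈ Finset.range n, p ^ i) * h) + (∑ i ∈ Finset.range n, p ^ i) * h * d := by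
      rw [hGd.eq, mul_assoc d]

end Ring

variable {R K : Type*} [Ring R] [AddCommGroup K] [Module R K] {d h p : Module.End R K}

theorem sub_apply_of_mem_ker (hp : IsHomotopyToOne d h p) {x : K} (hx : x ∈ LinearMap.ker d) :
    x - p x = d (h x) := by
  simpa [LinearMap.mem_ker.mp hx] using LinearMap.congr_fun hp x

end IsHomotopyToOne

theorem commute_pow_geom_sum_mul {A : Type*} [Semiring A] {p h : A} (hph : Commute p h) (n : ℕ) :
    Commute (p ^ n) ((∑ i ∈ Finset.range n, p ^ i) * h) :=
  (Commute.sum_right _ _ _ fun i _ => Commute.pow_pow_self p n i).mul_right (hph.pow_left n)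

section Cohomology

variable {R K : Type*} [Ring R] [AddCommGroup K] [Module R K]

/-- The cohomology `ker d / im d`. The coboundaries are pulled back to `ker d`, so the definition
does not take a proof of `d * d = 0`. -/
abbrev Cohomology (d : Module.End R K) : Type _ :=
  ↥(LinearMap.ker d) ⧸ (LinearMap.range d).comap (LinearMap.ker d).subtype

/-- The cohomology `ker (d|_W) / im (d|_W)` of the restriction of `d` to a subspace `W`. Cocycles
and coboundaries are submodules of the ambient `K`, so that `d` need not be restricted to an
endomorphism of `W`. -/
abbrev CohomologyOn (d : Module.End R K) (W : Submodule R K) : Type _ :=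
  ↥(W ⊓ LinearMap.ker d) ⧸ (Submodule.map d W).comap (W ⊓ LinearMap.ker d).subtype

variable {d h p : Module.End R K} {W : Submodule R K}

/-- The map induced on cohomology by the inclusion of `W` into `K`. -/
def cohomologyInclusion (d : Module.End R K) (W : Submodule R K) :
    CohomologyOn d W →ₗ[R] Cohomology d :=
  Submodule.mapQ _ _ (Submodule.inclusion inf_le_right) fun _ hx => LinearMap.map_le_range hx

/-- The map induced on cohomology by a chain map `p` with values in `W`. -/
def cohomologyMap (hpd : Commute p d) (hpW : ∀ x, p x ∈ W) :
    Cohomology d →ₗ[R] CohomologyOn d W :=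
  have hpd_apply (x : K) : p (d x) = d (p x) := LinearMap.congr_fun hpd.eq x
  Submodule.mapQ _ _
    (p.restrict fun x (hx : d x = 0) => ⟨hpW x, LinearMap.mem_ker.mpr <| by
      rw [← hpd_apply, hx, map_zero]⟩)
    fun _ ⟨z, hz⟩ => ⟨p z, hpW z, (hpd_apply z).symm.trans (congrArg p hz)⟩

theorem cohomologyInclusion_comp_cohomologyMap (hp : IsHomotopyToOne d h p) (hpd : Commute p d)
    (hpW : ∀ x, p x ∈ W) : cohomologyInclusion d W ∘ₗ cohomologyMap hpd hpW = LinearMap.id := by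
  refine Submodule.linearMap_qext _ (LinearMap.ext fun x => Eq.symm ?_)
  exact (Submodule.Quotient.eq _).mpr ⟨h x, (hp.sub_apply_of_mem_ker x.2).symm⟩

theorem cohomologyMap_comp_cohomologyInclusion (hp : IsHomotopyToOne d h p) (hpd : Commute p d)
    (hpW : ∀ x, p x ∈ W) (hhW : ∀ x ∈ W, h x ∈ W) :
    cohomologyMap hpd hpW ∘ₗ cohomologyInclusion d W = LinearMap.id := by
  refine Submodule.linearMap_qext _ (LinearMap.ext fun y => Eq.symm ?_)
  exact (Submodule.Quotient.eq _).mpr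
    ⟨h y, hhW y y.2.1, (hp.sub_apply_of_mem_ker y.2.2).symm⟩

/-- A chain map `p` with values in `W`, homotopic to the identity through a homotopy preserving
`W`, identifies the cohomology of `K` with that of `W`; the inverse is induced by the inclusion. -/
def cohomologyEquiv (hp : IsHomotopyToOne d h p) (hpd : Commute p d) (hpW : ∀ x, p x ∈ W)
    (hhW : ∀ x ∈ W, h x ∈ W) : Cohomology d ≃ₗ[R] CohomologyOn d W :=
  LinearEquiv.ofLinearMap (cohomologyMap hpd hpW) (cohomologyInclusion d W)
    (cohomologyMap_comp_cohomologyInclusion hp hpd hpW hhW)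
    (cohomologyInclusion_comp_cohomologyMap hp hpd hpW)

theorem cohomologyEquiv_mk (hp : IsHomotopyToOne d h p) (hpd : Commute p d) (hpW : ∀ x, p x ∈ W)
    (hhW : ∀ x ∈ W, h x ∈ W) (x : ↥(LinearMap.ker d)) (y : ↥(W ⊓ LinearMap.ker d))
    (hxy : (y : K) = p x) :
    cohomologyEquiv hp hpd hpW hhW (Submodule.Quotient.mk x) = Submodule.Quotient.mk y :=
  congrArg Submodule.Quotient.mk (Subtype.ext hxy.symm)

end Cohomology

theorem apply_mem_range_of_commute {R M : Type*} [Semiring R] [AddCommMonoid M] [Module R M]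
    {f g : Module.End R M} (hfg : Commute f g) :
    ∀ x ∈ LinearMap.range f, g x ∈ LinearMap.range f := by
  rintro _ ⟨z, rfl⟩
  exact ⟨g z, LinearMap.congr_fun hfg.eq z⟩

theorem mul_self_eq_zero_of_codisjoint {R M : Type*} [Semiring R] [AddCommMonoid M] [Module R M]
    {f : Module.End R M} {I C : Submodule R M} (hIC : Codisjoint I C)
    (hfI : ∀ x ∈ I, f x ∈ C) (hfC : ∀ x ∈ C, f x = 0) : f * f = 0 := by
  ext x
  obtain ⟨y, z, hy, hz, rfl⟩ := Submodule.codisjoint_iff_exists_add_eq.mp hIC x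
  simp [hfC z hz, hfC _ (hfI y hy)]

theorem statement7_general {R K : Type*} [Ring R] [AddCommGroup K] [Module R K]
    {d h : Module.End R K} (hd : d * d = 0) (hh : h * h = 0) (n : ℕ)
    {p : Module.End R K} (hp : p = (1 - h * d - d * h) ^ n) :
    (∀ α : K, d α = 0 → α - p α ∈ LinearMap.range d) ∧
    ∃ e : Cohomology d ≃ₗ[R] CohomologyOn d (LinearMap.range p),
      ∀ (x : ↥(LinearMap.ker d)) (y : ↥(LinearMap.range p ⊓ LinearMap.ker d)),
        (y : K) = p x → e (Submodule.Quotient.mk x) = Submodule.Quotient.mk y := by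
  subst hp
  have hP := IsHomotopyToOne.one_sub_mul_sub_mul d h
  have hPd := hP.commute_differential hd
  have hPn := hP.pow hPd n
  have hPnH := commute_pow_geom_sum_mul (hP.commute_homotopy hh) n
  refine ⟨fun α hα => ⟨_, (hPn.sub_apply_of_mem_ker hα).symm⟩, ?_⟩
  exact ⟨cohomologyEquiv hPn (hPd.pow_left n) (LinearMap.mem_range_self _)
    (apply_mem_range_of_commute hPnH), cohomologyEquiv_mk _ _ _ _⟩

theorem statement7
    {𝕜 K : Type*} [Field 𝕜] [AddCommGroup K] [Module 𝕜 K]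
    (S : ℕ) (Kfil : ℕ → Submodule 𝕜 K) (d : Module.End 𝕜 K)
    (hdd : d * d = 0)
    (hK0 : Kfil 0 = ⊤)
    (hmono : ∀ j, Kfil (j + 1) ≤ Kfil j)
    (hbot : Kfil (S + 1) = ⊥)
    (hdK : ∀ j, ∀ x ∈ Kfil j, d x ∈ Kfil j)
    (d0 : Module.End 𝕜 K)
    (hd00 : d0 * d0 = 0)
    (hd0 : ∀ j, ∀ x ∈ Kfil j, d x - d0 x ∈ Kfil (j + 1))
    (T C : Submodule 𝕜 K)
    (hT : IsCompl (LinearMap.ker d0) T)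
    (hTfil : ∀ j, ∀ α ∈ T, (α ∈ Kfil j ↔ d0 α ∈ Kfil j))
    (hC : IsCompl (LinearMap.range d0) C)
    (hTC : T ≤ C)
    (d0inv : Module.End 𝕜 K)
    (hinvC : ∀ x ∈ C, d0inv x = 0)
    (hinvT : ∀ x ∈ LinearMap.range d0, d0inv x ∈ T)
    (hinvd0 : ∀ x ∈ LinearMap.range d0, d0 (d0inv x) = x)
    (Pop : Module.End 𝕜 K) (hPop : Pop = 1 - d0inv * d - d * d0inv)
    (Pinf : Module.End 𝕜 K) (hPinf : Pinf = Pop ^ S)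
    (Pmod : Submodule 𝕜 K) (hPmod : Pmod = LinearMap.range Pinf)
    :
    (∀ α : K, d α = 0 → α - Pinf α ∈ LinearMap.range d) ∧
    ∃ e : (↥(LinearMap.ker d) ⧸ (LinearMap.range d).comap (LinearMap.ker d).subtype) ≃ₗ[𝕜]
          (↥(Pmod ⊓ LinearMap.ker d) ⧸
            (Submodule.map d Pmod).comap (Pmod ⊓ LinearMap.ker d).subtype),
      ∀ (x : ↥(LinearMap.ker d)) (y : ↥(Pmod ⊓ LinearMap.ker d)), (y : K) = Pinf (x : K) →
        e (Submodule.Quotient.mk x) = Submodule.Quotient.mk y := by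
  subst hPop hPmod
  exact statement7_general hdd
    (mul_self_eq_zero_of_codisjoint hC.codisjoint (fun x hx => hTC (hinvT x hx)) hinvC) S hPinf
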